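/- Let X be a totally disconnected compact metric space and α : X → X a homeomorphism, with E the closure of {α^n : n ∈ ℤ} in the self-maps of X with the product topology. The following are equivalent: (1) the system is almost distal, i.e., every forward proximal pair is forward asymptotic and every backward proximal pair is backward asymptotic; (2) E is nearly simple, i.e., E has a unique minimal two-sided ideal and every element of E having no compositional inverse in E lies in that ideal; (3) E is completely regular, i.e., for every f ∈ E there exists g ∈ E with f ∘ g ∘ f = f and f ∘ g = g ∘ f. -/

import Mathlib

/-- The `n`-th power (`n : ℤ`) of a homeomorphism `α`, as a self-map. -/
def zIter {X : Type*} [TopologicalSpace X] (α : X ≃ₜ X) (n : ℤ) : X → X :=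
  if 0 ≤ n then (⇑α)^[n.toNat] else (⇑α.symm)^[(-n).toNat]

/-- A two-sided ideal of the subsemigroup `S` of self-maps of `X` (under composition). -/
def IsIdealIn {X : Type*} (S I : Set (X → X)) : Prop :=
  I.Nonempty ∧ I ⊆ S ∧ ∀ f ∈ S, ∀ g ∈ I, f ∘ g ∈ I ∧ g ∘ f ∈ I

/-- The Ellis semigroup of the `ℤ`-action generated by the homeomorphism `α`. -/
def EllisZ {X : Type*} [TopologicalSpace X] (α : X ≃ₜ X) : Set (X → X) :=
  closure {h : X → X | ∃ n : ℤ, h = zIter α n}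

/-- The `ℤ`-action generated by `α` is almost distal: every forward proximal pair is
forward asymptotic and every backward proximal pair is backward asymptotic. -/
def AlmostDistalZ {X : Type*} [MetricSpace X] (α : X ≃ₜ X) : Prop :=
  (∀ x y : X,
    (∀ ε > 0, ∃ n : ℕ, dist ((⇑α)^[n] x) ((⇑α)^[n] y) < ε) →
    Filter.Tendsto (fun n : ℕ => dist ((⇑α)^[n] x) ((⇑α)^[n] y))
      Filter.atTop (nhds 0)) ∧
  (∀ x y : X,
    (∀ ε > 0, ∃ n : ℕ, dist ((⇑α.symm)^[n] x) ((⇑α.symm)^[n] y) < ε) →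
    Filter.Tendsto (fun n : ℕ => dist ((⇑α.symm)^[n] x) ((⇑α.symm)^[n] y))
      Filter.atTop (nhds 0))

/-- `E` is nearly simple: it has a unique minimal two-sided ideal and every element of `E`
with no compositional inverse in `E` lies in that ideal. -/
def NearlySimpleZ {X : Type*} [TopologicalSpace X] (α : X ≃ₜ X) : Prop :=
  ∃ K : Set (X → X),
    IsIdealIn (EllisZ α) K ∧
    (∀ I : Set (X → X), IsIdealIn (EllisZ α) I → I ⊆ K → I = K) ∧
    (∀ I : Set (X → X), IsIdealIn (EllisZ α) I →
      (∀ J : Set (X → X), IsIdealIn (EllisZ α) J → J ⊆ I → J = I) → I = K) ∧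
    (∀ f ∈ EllisZ α, (¬∃ g ∈ EllisZ α, f ∘ g = id ∧ g ∘ f = id) → f ∈ K)

/-- `E` is completely regular. -/
def CompletelyRegularZ {X : Type*} [TopologicalSpace X] (α : X ≃ₜ X) : Prop :=
  ∀ f ∈ EllisZ α, ∃ g ∈ EllisZ α, f ∘ g ∘ f = f ∧ f ∘ g = g ∘ f

section
open Set Filter Topology

theorem zIter_eq {X : Type*} [TopologicalSpace X] (α : X ≃ₜ X) (n : ℤ) :
    zIter α n = ⇑(α ^ n) := by
  have key : ∀ (β : X ≃ₜ X) (k : ℕ), ⇑(β ^ k) = (⇑β)^[k] := by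
    intro β k
    induction k with
    | zero => rfl
    | succ k ih => rw [pow_succ, Function.iterate_succ, ← ih]; rfl
  unfold zIter
  split_ifs with h
  · obtain ⟨k, rfl⟩ := Int.eq_ofNat_of_zero_le h
    simp [key]
  · obtain ⟨k, hk⟩ := Int.eq_ofNat_of_zero_le (show 0 ≤ -n by omega)
    obtain rfl : n = -k := by omega
    have : α ^ (-(k : ℤ)) = (α.symm) ^ k := by
      rw [zpow_neg, zpow_natCast, ← inv_pow]; rfl
    rw [this, key]; simp

theorem coe_pow_iter {X : Type*} [TopologicalSpace X] (α : X ≃ₜ X) (k : ℕ) :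
    (⇑α)^[k] = ⇑(α ^ (k : ℤ)) := by
  rw [← zIter_eq]; simp [zIter]

theorem Ellis_eq {X : Type*} [TopologicalSpace X] (α : X ≃ₜ X) :
    EllisZ α = closure (range fun n : ℤ => ⇑(α ^ n)) := by
  unfold EllisZ
  congr 1
  ext h
  simp [zIter_eq, eq_comm]

theorem Ellis_symm {X : Type*} [TopologicalSpace X] (α : X ≃ₜ X) :
    EllisZ α.symm = EllisZ α := by
  rw [Ellis_eq, Ellis_eq]
  congr 1
  ext h
  have : ∀ n : ℤ, α.symm ^ n = α ^ (-n) := fun n => by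
    rw [zpow_neg, ← inv_zpow]; rfl
  constructor
  · rintro ⟨n, rfl⟩; exact ⟨-n, by simp [this]⟩
  · rintro ⟨n, rfl⟩; exact ⟨-n, by simp [this]⟩

section
variable {X : Type*} [TopologicalSpace X]

theorem cont_right (g : X → X) : Continuous fun f : X → X => f ∘ g :=
  continuous_pi fun x => continuous_apply (g x)

theorem cont_left (g : X → X) (hg : Continuous g) : Continuous fun f : X → X => g ∘ f :=
  continuous_pi fun x => hg.comp (continuous_apply x)

theorem zp_mem (α : X ≃ₜ X) (n : ℤ) : ⇑(α ^ n) ∈ EllisZ α := by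
  rw [Ellis_eq]; exact subset_closure ⟨n, rfl⟩

theorem Ellis_ind (α : X ≃ₜ X) (S : Set (X → X)) (hS : IsClosed S)
    (h : ∀ n : ℤ, ⇑(α ^ n) ∈ S) : EllisZ α ⊆ S := by
  rw [Ellis_eq]; exact closure_minimal (by rintro _ ⟨n, rfl⟩; exact h n) hS

theorem Ellis_closed (α : X ≃ₜ X) : IsClosed (EllisZ α) := isClosed_closure

theorem Ellis_act (α : X ≃ₜ X) (S : Set (X → X)) (hS : IsClosed S) (g : X → X)
    (h : ∀ n : ℤ, ⇑(α ^ n) ∘ g ∈ S) {f : X → X} (hf : f ∈ EllisZ α) : f ∘ g ∈ S :=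
  Ellis_ind α ((fun f => f ∘ g) ⁻¹' S) (hS.preimage (cont_right g)) h hf

theorem Ellis_comp (α : X ≃ₜ X) {f g : X → X} (hf : f ∈ EllisZ α) (hg : g ∈ EllisZ α) :
    f ∘ g ∈ EllisZ α := by
  refine Ellis_act α _ (Ellis_closed α) g (fun n => ?_) hf
  refine Ellis_ind α ((fun h => ⇑(α ^ n) ∘ h) ⁻¹' EllisZ α)
    ((Ellis_closed α).preimage (cont_left _ (α ^ n).continuous)) (fun m => ?_) hg
  have := zp_mem α (n + m)
  rw [zpow_add] at this
  exact this

theorem Ellis_commute [T2Space X] (α : X ≃ₜ X) (n : ℤ) {f : X → X} (hf : f ∈ EllisZ α) :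
    f ∘ ⇑(α ^ n) = ⇑(α ^ n) ∘ f := by
  refine Ellis_ind α {f | f ∘ ⇑(α ^ n) = ⇑(α ^ n) ∘ f}
    (isClosed_eq (cont_right _) (cont_left _ (α ^ n).continuous)) (fun m => ?_) hf
  have h : α ^ m * α ^ n = α ^ n * α ^ m := by rw [← zpow_add, ← zpow_add, add_comm]
  exact congrArg DFunLike.coe h

/-- forward limits -/
def Ep (α : X ≃ₜ X) : Set (X → X) :=
  ⋂ N : ℤ, closure ((fun n : ℤ => ⇑(α ^ n)) '' Ici N)

theorem Ep_closed (α : X ≃ₜ X) : IsClosed (Ep α) := isClosed_iInter fun _ => isClosed_closure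

theorem Ep_sub (α : X ≃ₜ X) : Ep α ⊆ EllisZ α := by
  intro f hf
  rw [Ellis_eq]
  exact closure_mono (image_subset_range _ _) (mem_iInter.1 hf 0)

theorem Ep_left (α : X ≃ₜ X) {f g : X → X} (hf : f ∈ EllisZ α) (hg : g ∈ Ep α) :
    f ∘ g ∈ Ep α := by
  refine Ellis_act α _ (Ep_closed α) g (fun k => ?_) hf
  refine mem_iInter.2 fun N => ?_
  refine map_mem_closure (cont_left _ (α ^ k).continuous) (mem_iInter.1 hg (N - k)) ?_
  rintro _ ⟨n, hn, rfl⟩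
  refine ⟨k + n, ?_, ?_⟩
  · have : N - k ≤ n := hn
    show N ≤ k + n
    omega
  · simp only [zpow_add]; rfl

theorem Ep_nonempty [CompactSpace X] (α : X ≃ₜ X) : (Ep α).Nonempty := by
  refine IsCompact.nonempty_iInter_of_directed_nonempty_isCompact_isClosed _ ?_ ?_ ?_ ?_
  · intro a b
    exact ⟨max a b, closure_mono (image_mono (Ici_subset_Ici.2 (le_max_left _ _))),
      closure_mono (image_mono (Ici_subset_Ici.2 (le_max_right _ _)))⟩
  · exact fun N => ⟨_, subset_closure ⟨N, self_mem_Ici, rfl⟩⟩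
  · exact fun N => isClosed_closure.isCompact
  · exact fun N => isClosed_closure

theorem Ellis_cases [T2Space X] (α : X ≃ₜ X) {f : X → X} (hf : f ∈ EllisZ α) :
    (∃ n : ℤ, f = ⇑(α ^ n)) ∨ f ∈ Ep α ∨ f ∈ Ep α.symm := by
  by_contra! h
  obtain ⟨h1, h2, h3⟩ := h
  simp only [Ep, mem_iInter, not_forall] at h2 h3
  obtain ⟨N, hN⟩ := h2
  obtain ⟨M, hM⟩ := h3
  have hs : (range fun n : ℤ => ⇑(α ^ n)) ⊆
      ((fun n : ℤ => ⇑(α ^ n)) '' Icc (-M) N) ∪ (((fun n : ℤ => ⇑(α ^ n)) '' Ici N) ∪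
        ((fun n : ℤ => ⇑(α.symm ^ n)) '' Ici M)) := by
    rintro _ ⟨n, rfl⟩
    by_cases ha : N ≤ n
    · exact Or.inr (Or.inl ⟨n, ha, rfl⟩)
    by_cases hb : -M ≤ n
    · exact Or.inl ⟨n, ⟨hb, by omega⟩, rfl⟩
    · refine Or.inr (Or.inr ⟨-n, by show M ≤ -n; omega, ?_⟩)
      have : α.symm ^ (-n) = α ^ n := by
        rw [show α.symm = α⁻¹ from rfl, inv_zpow, zpow_neg, inv_inv]
      simp only [this]
  rw [Ellis_eq] at hf
  have := closure_mono hs hf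
  rw [closure_union, closure_union] at this
  rcases this with h | h | h
  · rw [((Set.finite_Icc _ _).image _).isClosed.closure_eq] at h
    obtain ⟨n, -, rfl⟩ := h
    exact h1 n rfl
  · exact hN h
  · exact hM h

theorem exists_idemp [T2Space X] (s : Set (X → X)) (hn : s.Nonempty) (hc : IsCompact s)
    (hm : ∀ x ∈ s, ∀ y ∈ s, x ∘ y ∈ s) : ∃ m ∈ s, m ∘ m = m := by
  letI : Semigroup (X → X) := { mul := fun f g => f ∘ g, mul_assoc := fun _ _ _ => rfl }
  exact exists_idempotent_in_compact_subsemigroup (fun r => cont_right r) s hn hc hm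

theorem alg {M : Type*} [Semigroup M] (E : Set M) (hE : ∀ x ∈ E, ∀ y ∈ E, x * y ∈ E)
    (f c e : M) (hc : c ∈ E) (he : e ∈ E) (hecf : e = c * f)
    (hee : e * e = e) (hef : e * f = f) (hP : ∀ a ∈ E, ∃ b ∈ E, b * (a * f) = f) :
    ∃ g ∈ E, f * (g * f) = f ∧ f * g = g * f := by
  have hfe : f * e = f := by
    obtain ⟨b, -, hb⟩ := hP c hc
    rw [← hecf] at hb
    rw [← hb, mul_assoc, hee]
  obtain ⟨g, hg⟩ : ∃ g, g = e * (c * e) := ⟨_, rfl⟩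
  have hgE : g ∈ E := hg ▸ hE _ he _ (hE _ hc _ he)
  have heg : e * g = g := by rw [hg, ← mul_assoc, hee]
  have hge : g * e = g := by rw [hg, mul_assoc, mul_assoc, hee]
  have hgf : g * f = e := by rw [hg, mul_assoc, mul_assoc, hef, ← hecf, hee]
  obtain ⟨b, hb, hb'⟩ := hP (g * c) (hE _ hgE _ hc)
  have hk : (c * b) * g = e := by
    have : c * (b * (g * c * f)) = c * f := by rw [hb']
    rw [mul_assoc g, ← hecf, hge] at this
    rw [mul_assoc, this]
  obtain ⟨k, hk0⟩ : ∃ k, k = e * (c * b * e) := ⟨_, rfl⟩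
  have hkg : k * g = e := by rw [hk0, mul_assoc, mul_assoc, heg, hk, hee]
  have hke : k * e = k := by rw [hk0, mul_assoc, mul_assoc, hee]
  have hkf : k = f := by rw [← hke, ← hgf, ← mul_assoc, hkg, hef]
  have hfg : f * g = e := by rw [← hkf, hkg]
  exact ⟨g, hgE, by rw [hgf, hfe], by rw [hfg, hgf]⟩

theorem reg_of_P [T2Space X] [CompactSpace X] (α : X ≃ₜ X) (f : X → X) (hf : f ∈ EllisZ α)
    (hP : ∀ a ∈ EllisZ α, ∃ b ∈ EllisZ α, b ∘ (a ∘ f) = f) :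
    ∃ g ∈ EllisZ α, f ∘ g ∘ f = f ∧ f ∘ g = g ∘ f := by
  have hEc : IsCompact (EllisZ α) := (Ellis_closed α).isCompact
  have hcl : IsClosed ((fun h : X → X => h ∘ f) ⁻¹' {f}) :=
    isClosed_singleton.preimage (cont_right f)
  obtain ⟨e, ⟨⟨c, hc, hce⟩, hef⟩, hee⟩ := exists_idemp
    (((fun h : X → X => h ∘ f) '' EllisZ α) ∩ ((fun h : X → X => h ∘ f) ⁻¹' {f}))
    (by
      obtain ⟨b, hb, h⟩ := hP f hf
      exact ⟨b ∘ f, ⟨b, hb, rfl⟩, h⟩)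
    ((hEc.image (cont_right f)).inter_right hcl)
    (by
      rintro _ ⟨⟨a, ha, rfl⟩, ha'⟩ _ ⟨⟨b, hb, rfl⟩, hb'⟩
      refine ⟨⟨a ∘ f ∘ b, Ellis_comp α ha (Ellis_comp α hf hb), rfl⟩, ?_⟩
      have h1 : (b ∘ f) ∘ f = f := hb'
      have h2 : (a ∘ f) ∘ f = f := ha'
      show (a ∘ f) ∘ ((b ∘ f) ∘ f) = f
      rw [h1, h2])
  letI : Semigroup (X → X) := { mul := fun f g => f ∘ g, mul_assoc := fun _ _ _ => rfl }
  exact alg (EllisZ α) (fun x hx y hy => Ellis_comp α (f := x) (g := y) hx hy) f c e hc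
    (hce ▸ Ellis_comp α hc hf) hce.symm hee hef hP

theorem exists_min_left [CompactSpace X] [T2Space X] (α : X ≃ₜ X) :
    ∃ L : Set (X → X), L.Nonempty ∧ L ⊆ EllisZ α ∧ (∀ f ∈ EllisZ α, ∀ l ∈ L, f ∘ l ∈ L) ∧
      ∀ l ∈ L, ∀ m ∈ L, ∃ b ∈ EllisZ α, b ∘ l = m := by
  let S : Set (Set (X → X)) :=
    {N | IsClosed N ∧ N.Nonempty ∧ N ⊆ EllisZ α ∧ ∀ f ∈ EllisZ α, ∀ l ∈ N, f ∘ l ∈ N}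
  obtain ⟨L, -, hL⟩ := zorn_superset_nonempty S (by
    intro c hcs hc hcn
    refine ⟨⋂₀ c, ⟨isClosed_sInter fun t ht => (hcs ht).1, ?_, ?_, ?_⟩, fun s hs =>
      Set.sInter_subset_of_mem hs⟩
    · rw [sInter_eq_iInter]
      haveI := hcn.coe_sort
      refine IsCompact.nonempty_iInter_of_directed_nonempty_isCompact_isClosed _ ?_ ?_ ?_ ?_
      · exact DirectedOn.directed_val (IsChain.directedOn hc.symm)
      exacts [fun i => (hcs i.prop).2.1, fun i => (hcs i.prop).1.isCompact,
        fun i => (hcs i.prop).1]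
    · obtain ⟨t, ht⟩ := hcn
      exact (sInter_subset_of_mem ht).trans (hcs ht).2.2.1
    · intro f hf l hl t ht
      exact (hcs ht).2.2.2 f hf l (hl t ht)) (EllisZ α)
    ⟨Ellis_closed α, ⟨_, zp_mem α 0⟩, Subset.rfl, fun f hf l hl => Ellis_comp α hf hl⟩
  obtain ⟨h1, h2, h3, h4⟩ := hL.prop
  refine ⟨L, h2, h3, h4, fun l hl m hm => ?_⟩
  have : (fun h : X → X => h ∘ l) '' EllisZ α = L := by
    apply hL.eq_of_subset
    · refine ⟨((Ellis_closed α).isCompact.image (cont_right l)).isClosed,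
        ⟨_, ⟨_, zp_mem α 0, rfl⟩⟩, ?_, ?_⟩
      · rintro _ ⟨a, ha, rfl⟩; exact Ellis_comp α ha (h3 hl)
      · rintro f hf _ ⟨a, ha, rfl⟩; exact ⟨f ∘ a, Ellis_comp α hf ha, rfl⟩
    · rintro _ ⟨a, ha, rfl⟩; exact h4 a ha l hl
  rw [← this] at hm
  exact hm

theorem two_three [CompactSpace X] [T2Space X] (α : X ≃ₜ X) (h : NearlySimpleZ α) :
    CompletelyRegularZ α := by
  obtain ⟨K, ⟨⟨k, hk⟩, hKE, hK⟩, hmin, -, hinv⟩ := h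
  intro f hf
  by_cases hfi : ∃ g ∈ EllisZ α, f ∘ g = id ∧ g ∘ f = id
  · obtain ⟨g, hg, h1, h2⟩ := hfi
    exact ⟨g, hg, by rw [h2]; rfl, by rw [h1, h2]⟩
  have hfK := hinv f hf hfi
  apply reg_of_P α f hf
  obtain ⟨L, ⟨l0, hl0⟩, hLE, hL, hLm⟩ := exists_min_left α
  have hLK : L ⊆ K := by
    intro m hm
    obtain ⟨b, hb, rfl⟩ := hLm (k ∘ l0) (hL k (hKE hk) l0 hl0) m hm
    exact (hK b hb _ (hK l0 (hLE hl0) k hk).2).1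
  have hI := hmin {h | ∃ l ∈ L, ∃ s ∈ EllisZ α, h = l ∘ s} (by
    refine ⟨⟨l0 ∘ l0, l0, hl0, l0, hLE hl0, rfl⟩, ?_, ?_⟩
    · rintro _ ⟨l, hl, s, hs, rfl⟩; exact Ellis_comp α (hLE hl) hs
    · rintro a ha _ ⟨l, hl, s, hs, rfl⟩
      exact ⟨⟨a ∘ l, hL a ha l hl, s, hs, rfl⟩, ⟨l, hl, s ∘ a, Ellis_comp α hs ha, rfl⟩⟩) (by
    rintro _ ⟨l, hl, s, hs, rfl⟩
    exact (hK s hs l (hLK hl)).2)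
  rw [← hI] at hfK
  obtain ⟨l, hl, s, hs, rfl⟩ := hfK
  intro a ha
  obtain ⟨b, hb, hb'⟩ := hLm (a ∘ l) (hL a ha l hl) l hl
  refine ⟨b, hb, ?_⟩
  show (b ∘ (a ∘ l)) ∘ s = l ∘ s
  rw [hb']
end

section
variable {X : Type*} [MetricSpace X] [CompactSpace X]

/-- forward half of almost distality -/
def Fwd (α : X ≃ₜ X) : Prop := ∀ x y : X,
    (∀ ε > 0, ∃ n : ℕ, dist ((⇑α)^[n] x) ((⇑α)^[n] y) < ε) →
    Filter.Tendsto (fun n : ℕ => dist ((⇑α)^[n] x) ((⇑α)^[n] y))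
      Filter.atTop (nhds 0)


theorem Fwd_ker (α : X ≃ₜ X) (h : Fwd α) {e f : X → X} (he : e ∈ Ep α) (hf : f ∈ Ep α)
    (x y : X) (hxy : e x = e y) : f x = f y := by
  have hcont : Continuous fun h : X → X => dist (h x) (h y) :=
    (continuous_apply x).dist (continuous_apply y)
  have h1 := h x y (by
    intro ε hε
    have ho : IsOpen {h : X → X | dist (h x) (h y) < ε} := isOpen_lt hcont continuous_const
    obtain ⟨_, hz, n, hn, rfl⟩ := mem_closure_iff.1 (mem_iInter.1 he 0) _ ho (by simpa [hxy])
    obtain ⟨k, rfl⟩ := Int.eq_ofNat_of_zero_le hn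
    exact ⟨k, by rw [coe_pow_iter]; exact hz⟩)
  rw [← dist_le_zero]
  refine le_of_forall_pos_le_add fun ε hε => ?_
  rw [zero_add]
  obtain ⟨N, hN⟩ := eventually_atTop.1 (h1.eventually (gt_mem_nhds hε))
  have hc : IsClosed {h : X → X | dist (h x) (h y) ≤ ε} := isClosed_le hcont continuous_const
  refine closure_minimal ?_ hc (mem_iInter.1 hf N)
  rintro _ ⟨n, hn, rfl⟩
  have hn' : (N : ℤ) ≤ n := hn
  obtain ⟨k, rfl⟩ := Int.eq_ofNat_of_zero_le (show 0 ≤ n by omega)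
  have := hN k (by omega)
  rw [coe_pow_iter] at this
  exact this.le

theorem Fwd_sub (α : X ≃ₜ X) (h : Fwd α) (I : Set (X → X)) (hI : IsIdealIn (EllisZ α) I) :
    Ep α ⊆ I := by
  intro f hf
  obtain ⟨⟨g, hg⟩, hIE, hI⟩ := hI
  have hfE := Ep_sub α hf
  obtain ⟨m, hm⟩ : ∃ m, m = g ∘ f := ⟨_, rfl⟩
  have hmI : m ∈ I := hm ▸ (hI f hfE g hg).2
  have hmE : m ∈ Ep α := hm ▸ Ep_left α (hIE hg) hf
  obtain ⟨e, ⟨c, hc, rfl⟩, hee⟩ := exists_idemp ((fun h : X → X => h ∘ m) '' EllisZ α)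
    ⟨_, ⟨_, zp_mem α 0, rfl⟩⟩ ((Ellis_closed α).isCompact.image (cont_right m))
    (by
      rintro _ ⟨a, ha, rfl⟩ _ ⟨b, hb, rfl⟩
      exact ⟨a ∘ m ∘ b, Ellis_comp α ha (Ellis_comp α (hIE hmI) hb), rfl⟩)
  have heI : c ∘ m ∈ I := (hI c hc m hmI).1
  have heE : c ∘ m ∈ Ep α := Ep_left α hc hmE
  have : f = f ∘ (c ∘ m) := by
    funext x
    exact Fwd_ker α h heE hf _ _ (congrFun hee x).symm
  rw [this]
  exact (hI f hfE _ heI).1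

theorem one_two (α : X ≃ₜ X) (h1 : Fwd α) (h2 : Fwd α.symm) : NearlySimpleZ α := by
  have hsub : ∀ I, IsIdealIn (EllisZ α) I → Ep α ∪ Ep α.symm ⊆ I := fun I hI =>
    union_subset (Fwd_sub α h1 I hI) (Fwd_sub α.symm h2 I (by rwa [Ellis_symm]))
  have hl : ∀ f ∈ EllisZ α, ∀ g ∈ Ep α ∪ Ep α.symm, f ∘ g ∈ Ep α ∪ Ep α.symm := by
    rintro f hf g (hg | hg)
    · exact Or.inl (Ep_left α hf hg)
    · exact Or.inr (Ep_left α.symm (by rwa [Ellis_symm]) hg)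
  have hKE : Ep α ∪ Ep α.symm ⊆ EllisZ α :=
    union_subset (Ep_sub α) (by rw [← Ellis_symm]; exact Ep_sub α.symm)
  have hK : IsIdealIn (EllisZ α) (Ep α ∪ Ep α.symm) := by
    refine ⟨(Ep_nonempty α).inl, hKE, fun f hf g hg => ⟨hl f hf g hg, ?_⟩⟩
    rcases Ellis_cases α hf with ⟨n, rfl⟩ | h
    · rw [Ellis_commute α n (hKE hg)]
      exact hl _ hf g hg
    · exact hl g (hKE hg) f h
  refine ⟨_, hK, fun I hI h => h.antisymm (hsub I hI), fun I hI h => (h _ hK (hsub I hI)).symm,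
    fun f hf h => ?_⟩
  rcases Ellis_cases α hf with ⟨n, rfl⟩ | h'
  · refine absurd ⟨⇑(α ^ (-n)), zp_mem α _, ?_, ?_⟩ h
    · have : α ^ n * α ^ (-n) = 1 := by rw [← zpow_add]; simp
      exact congrArg DFunLike.coe this
    · have : α ^ (-n) * α ^ n = 1 := by rw [← zpow_add]; simp
      exact congrArg DFunLike.coe this
  · exact h'

theorem gap_seq (D : ℕ → Prop) (h1 : ∀ N, ∃ n ≥ N, D n)
    (h2 : ∀ m N, ∃ n ≥ N, ∀ j ≤ m, ¬ D (n + j)) (i : ℕ) :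
    ∃ n ≥ i, D n ∧ ∀ j, 1 ≤ j → j ≤ i → ¬ D (n + j) := by
  classical
  obtain ⟨d, hd, hD⟩ := h1 i
  obtain ⟨n, hn, hg⟩ := h2 i d
  refine ⟨Nat.findGreatest D n, hd.trans (Nat.le_findGreatest hn hD),
    Nat.findGreatest_spec hn hD, fun j hj1 hji => ?_⟩
  have hle := Nat.findGreatest_le (P := D) n
  by_cases h : Nat.findGreatest D n + j ≤ n
  · exact Nat.findGreatest_is_greatest (by omega) h
  · obtain ⟨k, hk⟩ := Nat.exists_eq_add_of_le (show n ≤ Nat.findGreatest D n + j by omega)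
    rw [hk]
    exact hg k (by omega)

theorem three_fwd [TotallyDisconnectedSpace X] (α : X ≃ₜ X) (h : CompletelyRegularZ α) :
    Fwd α := by
  intro x y hp
  by_contra hna
  obtain ⟨δ, hδ, hfar⟩ : ∃ δ > 0, ∀ N, ∃ n ≥ N, δ ≤ dist ((⇑α)^[n] x) ((⇑α)^[n] y) := by
    rw [Metric.tendsto_atTop] at hna
    push Not at hna
    obtain ⟨δ, hδ, h⟩ := hna
    exact ⟨δ, hδ, fun N => by simpa using h N⟩
  obtain ⟨W, hW, hdW, hWd⟩ := exists_clopen_of_closed_subset_open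
    (Z := diagonal X) (U := {p : X × X | dist p.1 p.2 < δ}) isClosed_diagonal
    (isOpen_lt (by fun_prop) continuous_const) (by rintro ⟨a, b⟩ hab; obtain rfl : a = b := hab; simpa)
  simp only [coe_pow_iter] at hp hfar
  have hseq := gap_seq (fun n => ((α ^ (n : ℤ)) x, (α ^ (n : ℤ)) y) ∉ W)
    (by
      intro N
      obtain ⟨n, hn, hd⟩ := hfar N
      exact ⟨n, hn, fun hw => absurd (hWd hw) (not_lt.2 hd)⟩)
    (by
      intro m N
      have hV : (⋂ j ∈ Iic (m + N), (fun p : X × X => ((α ^ (j : ℤ)) p.1, (α ^ (j : ℤ)) p.2)) ⁻¹' W)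
          ∈ uniformity X := by
        rw [biInter_mem (finite_Iic _)]
        intro j _
        rw [← nhdsSet_diagonal_eq_uniformity]
        refine IsOpen.mem_nhdsSet (hW.isOpen.preimage ?_) |>.2 ?_
        · exact ((α ^ (j : ℤ)).continuous.comp continuous_fst).prodMk
            ((α ^ (j : ℤ)).continuous.comp continuous_snd)
        · rintro ⟨a, b⟩ hab
          obtain rfl : a = b := hab
          exact hdW rfl
      obtain ⟨ε, hε, hεV⟩ := Metric.mem_uniformity_dist.1 hV
      obtain ⟨n, hn⟩ := hp ε hε
      have := hεV hn
      simp only [mem_iInter] at this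
      refine ⟨n + N, by omega, fun j hj => not_not.2 ?_⟩
      have h' := this (N + j) (by show N + j ≤ m + N; omega)
      have he : ((n + N + j : ℕ) : ℤ) = ((N + j : ℕ) : ℤ) + n := by push_cast; ring
      rw [he, zpow_add]
      exact h')
  choose n hni hnD hng using hseq
  obtain ⟨f, hf⟩ : ∃ f : X → X, Tendsto (fun i => ⇑(α ^ (n i : ℤ))) (hyperfilter ℕ) (𝓝 f) :=
    ⟨_, ((hyperfilter ℕ).map (fun i => ⇑(α ^ (n i : ℤ)))).le_nhds_lim⟩
  have hfE : f ∈ EllisZ α := (Ellis_closed α).mem_of_tendsto hf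
    (Eventually.of_forall fun i => zp_mem α _)
  rw [tendsto_pi_nhds] at hf
  have hev : ∀ N : ℕ, ∀ᶠ i in (hyperfilter ℕ : Filter ℕ), N ≤ i := fun N =>
    Nat.hyperfilter_le_atTop (eventually_ge_atTop N)
  have hpW : (f x, f y) ∉ W := hW.compl.isClosed.mem_of_tendsto ((hf x).prodMk_nhds (hf y))
    (Eventually.of_forall hnD)
  have hpos : ∀ k : ℤ, 1 ≤ k → ((α ^ k) (f x), (α ^ k) (f y)) ∈ W := by
    intro k hk
    obtain ⟨j, rfl⟩ := Int.eq_ofNat_of_zero_le (show 0 ≤ k by omega)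
    refine hW.isClosed.mem_of_tendsto
      ((((α ^ (j : ℤ)).continuous.tendsto _).comp (hf x)).prodMk_nhds
        (((α ^ (j : ℤ)).continuous.tendsto _).comp (hf y))) ?_
    filter_upwards [hev j] with i hi
    have := not_not.1 (hng i j (by omega) hi)
    rw [show ((n i + j : ℕ) : ℤ) = (j : ℤ) + n i by push_cast; ring, zpow_add] at this
    exact this
  have hall : ∀ k : ℤ, ((α ^ k) (f (f x)), (α ^ k) (f (f y))) ∈ W := by
    intro k
    refine hW.isClosed.mem_of_tendsto
      ((((α ^ k).continuous.tendsto _).comp (hf (f x))).prodMk_nhds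
        (((α ^ k).continuous.tendsto _).comp (hf (f y)))) ?_
    filter_upwards [hev (1 - k).toNat] with i hi
    have := hpos (k + n i) (by have := hni i; omega)
    rw [zpow_add] at this
    exact this
  obtain ⟨g, hg, h1, h2⟩ := h f hfE
  have hgf : ∀ z, g (f (f z)) = f z := fun z => by
    have a := congrFun h1 z
    have b := congrFun h2 (f z)
    simp only [Function.comp] at a b
    rw [← b, a]
  have hcl : IsClosed {h : X → X | (h (f (f x)), h (f (f y))) ∈ W} :=
    hW.isClosed.preimage ((continuous_apply _).prodMk (continuous_apply _))
  have := Ellis_ind α _ hcl hall hg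
  simp only [mem_ofPred_eq, hgf] at this
  exact hpW this
end

end

/-- For a homeomorphism `α` of a totally disconnected compact metric space,
the `ℤ`-action is almost distal iff `E` is nearly simple iff `E` is completely regular. -/
theorem stmt_19 {X : Type*} [MetricSpace X] [CompactSpace X]
    (hbasis : ∃ B : Set (Set X),
      (∀ U ∈ B, IsClopen U) ∧ TopologicalSpace.IsTopologicalBasis B)
    (α : X ≃ₜ X) :
    (AlmostDistalZ α ↔ NearlySimpleZ α) ∧
    (NearlySimpleZ α ↔ CompletelyRegularZ α) := by
  haveI : TotallyDisconnectedSpace X := by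
    obtain ⟨B, hB, hb⟩ := hbasis
    have hb' : TopologicalSpace.IsTopologicalBasis {s : Set X | IsClopen s} :=
      TopologicalSpace.isTopologicalBasis_of_isOpen_of_nhds (fun u hu => hu.isOpen) (by
        intro a u ha hu
        obtain ⟨v, hv, hav, hvu⟩ := hb.exists_subset_of_mem_open ha hu
        exact ⟨v, hB v hv, hav, hvu⟩)
    haveI := totallySeparatedSpace_of_t0_of_basis_clopen hb'
    infer_instance
  have h12 : AlmostDistalZ α → NearlySimpleZ α := fun h => one_two α h.1 h.2
  have h31 : CompletelyRegularZ α → AlmostDistalZ α := fun h =>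
    ⟨three_fwd α h, three_fwd α.symm (by unfold CompletelyRegularZ; rwa [Ellis_symm])⟩
  exact ⟨⟨h12, fun h => h31 (two_three α h)⟩, ⟨two_three α, fun h => h12 (h31 h)⟩⟩
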